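/- arXiv:1812.08723 — 2 statements merged into one kernel-verified Lean document; each statement's English description precedes it below -/
import Mathlib

section
/- Let H₁ and H₂ be Hilbert spaces, let A : H₁ → H₂ be a bounded linear operator, let b ∈ H₂, and let λ > 0. Then the operator AA* + λI on H₂ is invertible with bounded inverse, and the function F(x) = ‖Ax − b‖²_{H₂} + λ‖x‖²_{H₁} has a unique minimizer over H₁, namely x* = A*(AA* + λI)^{−1} b. -/
open scoped RealInnerProductSpace

noncomputable section

/-!
Since `AA*` is monotone, `AA* + λI` is coercive, hence invertible. For `y = (AA* + λI)⁻¹ b` the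
residual of `A* y` is `A A* y - b = -λ y`, so the first variation of `F` at `A* y` in a direction
`h` is `2 Re (⟪-λ y, A h⟫ + λ ⟪A* y, h⟫) = 0`. As `F` is quadratic with second-order part
`‖A h‖² + λ ‖h‖²`, positive for `h ≠ 0`, a critical point is the unique minimizer.
-/

section TikhonovFunctional

variable {𝕜 E F : Type*} [RCLike 𝕜]
  [SeminormedAddCommGroup E] [InnerProductSpace 𝕜 E]
  [SeminormedAddCommGroup F] [InnerProductSpace 𝕜 F]

/-- The Tikhonov (ridge) functional `x ↦ ‖A x - b‖² + c ‖x‖²`: the least-squares error of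
`A x = b` with quadratic penalty of weight `c`. -/
def tikhonovFunctional (A : E →ₗ[𝕜] F) (b : F) (c : ℝ) (x : E) : ℝ :=
  ‖A x - b‖ ^ 2 + c * ‖x‖ ^ 2

theorem tikhonovFunctional_add (A : E →ₗ[𝕜] F) (b : F) (c : ℝ) (x h : E) :
    tikhonovFunctional A b c (x + h) =
      tikhonovFunctional A b c x
        + 2 * RCLike.re (inner 𝕜 (A x - b) (A h) + (c : 𝕜) * inner 𝕜 x h)
        + tikhonovFunctional A 0 c h := by
  have residual_add : A (x + h) - b = (A x - b) + A h := by rw [map_add, add_sub_right_comm]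
  simp only [tikhonovFunctional]
  rw [residual_add, norm_add_sq (𝕜 := 𝕜) (A x - b), norm_add_sq (𝕜 := 𝕜) x, map_add,
    RCLike.re_ofReal_mul, sub_zero]
  ring

end TikhonovFunctional

theorem tikhonovFunctional_zero_pos {𝕜 E F : Type*} [RCLike 𝕜]
    [NormedAddCommGroup E] [InnerProductSpace 𝕜 E]
    [SeminormedAddCommGroup F] [InnerProductSpace 𝕜 F]
    (A : E →ₗ[𝕜] F) {c : ℝ} (hc : 0 < c) {h : E} (hh : h ≠ 0) :
    0 < tikhonovFunctional A 0 c h :=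
  add_pos_of_nonneg_of_pos (sq_nonneg _) (mul_pos hc (pow_pos (norm_pos_iff.mpr hh) 2))

theorem tikhonovFunctional_lt_of_forall_inner_eq_zero {𝕜 E F : Type*} [RCLike 𝕜]
    [NormedAddCommGroup E] [InnerProductSpace 𝕜 E]
    [SeminormedAddCommGroup F] [InnerProductSpace 𝕜 F]
    {A : E →ₗ[𝕜] F} {b : F} {c : ℝ} (hc : 0 < c) {x₀ : E}
    (critical : ∀ h, inner 𝕜 (A x₀ - b) (A h) + (c : 𝕜) * inner 𝕜 x₀ h = 0)
    {x : E} (hx : x ≠ x₀) :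
    tikhonovFunctional A b c x₀ < tikhonovFunctional A b c x := by
  have expansion := tikhonovFunctional_add A b c x₀ (x - x₀)
  rw [add_sub_cancel, critical, map_zero, mul_zero, add_zero] at expansion
  rw [expansion]
  exact lt_add_of_pos_right _ (tikhonovFunctional_zero_pos A hc (sub_ne_zero.mpr hx))

theorem isUnit_add_smul_one_of_reApplyInnerSelf_nonneg {𝕜 H : Type*} [RCLike 𝕜]
    [NormedAddCommGroup H] [InnerProductSpace 𝕜 H] [CompleteSpace H]
    {T : H →L[𝕜] H} (hT : ∀ x, 0 ≤ T.reApplyInnerSelf x) {c : ℝ} (hc : 0 < c) :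
    IsUnit (T + (c : 𝕜) • (1 : H →L[𝕜] H)) := by
  refine ContinuousLinearMap.isUnit_of_forall_le_norm_inner_map _ (c := ⟨c, hc.le⟩) hc fun x ↦ ?_
  calc ‖x‖ ^ 2 * c ≤ T.reApplyInnerSelf x + c * ‖x‖ ^ 2 := by linarith [hT x]
    _ = RCLike.re (inner 𝕜 ((T + (c : 𝕜) • (1 : H →L[𝕜] H)) x) x) := by
      rw [ContinuousLinearMap.reApplyInnerSelf_apply, add_apply, smul_apply,
        one_apply_eq_self, inner_add_left, inner_smul_left, map_add,
        RCLike.conj_ofReal, RCLike.re_ofReal_mul, inner_self_eq_norm_sq]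
    _ ≤ ‖inner 𝕜 ((T + (c : 𝕜) • (1 : H →L[𝕜] H)) x) x‖ := RCLike.re_le_norm _

section Adjoint

open ContinuousLinearMap (adjoint)

variable {𝕜 H₁ H₂ : Type*} [RCLike 𝕜]
  [NormedAddCommGroup H₁] [InnerProductSpace 𝕜 H₁] [CompleteSpace H₁]
  [NormedAddCommGroup H₂] [InnerProductSpace 𝕜 H₂] [CompleteSpace H₂]

theorem isUnit_comp_adjoint_add_smul_one (A : H₁ →L[𝕜] H₂) {c : ℝ} (hc : 0 < c) :
    IsUnit (A.comp (adjoint A) + (c : 𝕜) • (1 : H₂ →L[𝕜] H₂)) :=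
  isUnit_add_smul_one_of_reApplyInnerSelf_nonneg
    (ContinuousLinearMap.isPositive_self_comp_adjoint A).2 hc

theorem inner_residual_add_inner_adjoint_eq_zero {A : H₁ →L[𝕜] H₂} {b y : H₂} {c : ℝ}
    (hy : A (adjoint A y) + (c : 𝕜) • y = b) (h : H₁) :
    inner 𝕜 (A (adjoint A y) - b) (A h) + (c : 𝕜) * inner 𝕜 (adjoint A y) h = 0 := by
  have residual : A (adjoint A y) - b = -((c : 𝕜) • y) := by rw [← hy, sub_add_cancel_left]
  rw [residual, inner_neg_left, inner_smul_left, RCLike.conj_ofReal,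
    ContinuousLinearMap.adjoint_inner_left, neg_add_cancel]

theorem tikhonovFunctional_adjoint_lt {A : H₁ →L[𝕜] H₂} {b y : H₂} {c : ℝ} (hc : 0 < c)
    (hy : A (adjoint A y) + (c : 𝕜) • y = b) {x : H₁} (hx : x ≠ adjoint A y) :
    tikhonovFunctional A.toLinearMap b c (adjoint A y) <
      tikhonovFunctional A.toLinearMap b c x :=
  tikhonovFunctional_lt_of_forall_inner_eq_zero hc (inner_residual_add_inner_adjoint_eq_zero hy) hx

end Adjoint

/-- Lemma C.2 of the paper: let `H₁, H₂` be Hilbert spaces over `𝕜`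
(`𝕜 = ℝ` or `ℂ`), `A : H₁ → H₂` a bounded linear operator, `b ∈ H₂` and `λ > 0`.  Then
`AA* + λI` is invertible with bounded inverse, and `F(x) = ‖Ax − b‖² + λ‖x‖²` has the
unique minimizer `x* = A*(AA* + λI)⁻¹ b`. -/
theorem statement4 {𝕜 : Type*} [RCLike 𝕜]
    {H₁ H₂ : Type*}
    [NormedAddCommGroup H₁] [InnerProductSpace 𝕜 H₁] [CompleteSpace H₁]
    [NormedAddCommGroup H₂] [InnerProductSpace 𝕜 H₂] [CompleteSpace H₂]
    (A : H₁ →L[𝕜] H₂) (b : H₂) (lam : ℝ) (hlam : 0 < lam) :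
    ∃ B : H₂ →L[𝕜] H₂,
      -- `AA* + λI` is invertible with bounded inverse `B`
      (A.comp (ContinuousLinearMap.adjoint A) +
          ((lam : 𝕜) • (1 : H₂ →L[𝕜] H₂))).comp B = 1 ∧
      B.comp (A.comp (ContinuousLinearMap.adjoint A) +
          ((lam : 𝕜) • (1 : H₂ →L[𝕜] H₂))) = 1 ∧
      -- `x* = A*(AA* + λI)⁻¹ b` is the unique minimizer of `F`
      (∀ x : H₁, ‖A (ContinuousLinearMap.adjoint A (B b)) - b‖ ^ 2 +
            lam * ‖ContinuousLinearMap.adjoint A (B b)‖ ^ 2 ≤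
          ‖A x - b‖ ^ 2 + lam * ‖x‖ ^ 2) ∧
      (∀ x : H₁, (∀ x' : H₁, ‖A x - b‖ ^ 2 + lam * ‖x‖ ^ 2 ≤
            ‖A x' - b‖ ^ 2 + lam * ‖x'‖ ^ 2) →
          x = ContinuousLinearMap.adjoint A (B b)) := by
  obtain ⟨B, right_inv, left_inv⟩ :=
    isUnit_iff_exists.mp (isUnit_comp_adjoint_add_smul_one A hlam)
  have lt_of_ne (x : H₁) (hx : x ≠ ContinuousLinearMap.adjoint A (B b)) :=
    tikhonovFunctional_adjoint_lt hlam (DFunLike.congr_fun right_inv b) hx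
  refine ⟨B, right_inv, left_inv, fun x ↦ ?_, fun x x_min ↦ ?_⟩
  · rcases eq_or_ne x (ContinuousLinearMap.adjoint A (B b)) with rfl | hx
    · exact le_rfl
    · exact (lt_of_ne x hx).le
  · by_contra hx
    exact (lt_of_ne x hx).not_ge (x_min _)

end
end

section
/- Let p be a polynomial with complex coefficients of degree at most d, let T > 0, and let t ∈ (0,T). Setting r = min(t, T−t)/T, one has |p(t)|² ≤ ((d+1)/√r) · (1/T)∫₀ᵀ |p(u)|² du. -/
open scoped Real

noncomputable section

/-!
Restrict `p` to the unit circle through `x = Re z`. For `0 ≤ q < 1` the products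
`p (Re z) * Im z / |1 - q z ^ 2|` with `deg p ≤ d` form a `(d + 1)`-dimensional space. It is spanned
by the imaginary parts of the unimodular functions
`z ^ (n + 1) * conj (1 - q z ^ 2) / |1 - q z ^ 2|`, and these are orthogonal on the circle by the
mean value property (Bernstein and Szegő). Being bounded by `1` and of mean square at least `1 / 2`,
they control point evaluation by `2 (d + 1)` times the mean square. A choice of `q` adapted to the
evaluation point makes the weight `(Im z) ^ 2 / |1 - q z ^ 2| ^ 2` at most a multiple of `|Im z|`,
and `|Im z|` times arc length projects to Lebesgue measure on `[-1, 1]`.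
-/

open ComplexConjugate Polynomial

section OrthogonalSums

theorem norm_sq_sum_smul_le_card_mul {ι E : Type*} [SeminormedAddCommGroup E] [NormedSpace ℝ E]
    {s : Finset ι} {a : ι → ℝ} (ha : ∀ i ∈ s, |a i| ≤ 1) (c : ι → E) :
    ‖∑ i ∈ s, a i • c i‖ ^ 2 ≤ s.card * ∑ i ∈ s, ‖c i‖ ^ 2 := by
  have hnorm : ‖∑ i ∈ s, a i • c i‖ ≤ ∑ i ∈ s, ‖c i‖ :=
    norm_sum_le_of_le s fun i hi ↦ by
      simpa [norm_smul] using mul_le_of_le_one_left (norm_nonneg (c i)) (ha i hi)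
  calc ‖∑ i ∈ s, a i • c i‖ ^ 2 ≤ (∑ i ∈ s, ‖c i‖) ^ 2 := by gcongr
    _ ≤ s.card * ∑ i ∈ s, ‖c i‖ ^ 2 := sq_sum_le_card_mul_sum_sq

theorem circleAverage_norm_sq_sum_smul {ι E : Type*} [NormedAddCommGroup E]
    [InnerProductSpace ℝ E] {s : Finset ι} {f : ι → ℂ → ℝ} {z₀ : ℂ} {R : ℝ}
    (hf : ∀ i ∈ s, ∀ j ∈ s, CircleIntegrable (fun z ↦ f i z * f j z) z₀ R)
    (horth : ∀ i ∈ s, ∀ j ∈ s, i ≠ j → Real.circleAverage (fun z ↦ f i z * f j z) z₀ R = 0)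
    (c : ι → E) :
    Real.circleAverage (fun z ↦ ‖∑ i ∈ s, f i z • c i‖ ^ 2) z₀ R =
      ∑ i ∈ s, ‖c i‖ ^ 2 * Real.circleAverage (fun z ↦ f i z ^ 2) z₀ R := by
  have hexpand (z : ℂ) : ‖∑ i ∈ s, f i z • c i‖ ^ 2 =
      ∑ i ∈ s, ∑ j ∈ s, inner ℝ (c i) (c j) • (f i z * f j z) := by
    simp only [← real_inner_self_eq_norm_sq, sum_inner, inner_sum, real_inner_smul_left,
      real_inner_smul_right, smul_eq_mul]
    refine Finset.sum_congr rfl fun i _ ↦ Finset.sum_congr rfl fun j _ ↦ ?_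
    rw [real_inner_comm]
    ring
  have hint (i) (hi : i ∈ s) (j) (hj : j ∈ s) :
      CircleIntegrable (fun z ↦ inner ℝ (c i) (c j) • (f i z * f j z)) z₀ R :=
    (hf i hi j hj).const_smul
  simp only [hexpand]
  rw [Real.circleAverage_fun_sum fun i hi ↦ CircleIntegrable.fun_sum s (hint i hi)]
  refine Finset.sum_congr rfl fun i hi ↦ ?_
  rw [Real.circleAverage_fun_sum (hint i hi), Finset.sum_eq_single_of_mem i hi]
  · simp only [sq (f i _)]
    rw [Real.circleAverage_fun_smul, real_inner_self_eq_norm_sq, smul_eq_mul]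
  · intro j hj hji
    rw [Real.circleAverage_fun_smul, horth i hi j hj hji.symm, smul_zero]

end OrthogonalSums

section BernsteinSzegoPoly

open Polynomial.Chebyshev

theorem chebyshev_U_eval_re_mul_im {z : ℂ} (hz : ‖z‖ = 1) (n : ℤ) :
    (U ℂ n).eval (z.re : ℂ) * z.im = (z ^ (n + 1)).im := by
  obtain ⟨φ, rfl⟩ := (Complex.norm_eq_one_iff z).1 hz
  have hpow : Complex.exp (φ * Complex.I) ^ (n + 1) =
      Complex.exp (((n + 1) * φ : ℝ) * Complex.I) := by
    rw [← Complex.exp_int_mul]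
    push_cast
    ring_nf
  rw [hpow]
  simp only [Complex.exp_ofReal_mul_I_re, Complex.exp_ofReal_mul_I_im]
  exact_mod_cast U_complex_cos (φ : ℂ) n

/-- The polynomial of degree `n` orthogonal for the Bernstein–Szegő weight
`√(1 - x ^ 2) / |1 - q z ^ 2| ^ 2` on `[-1, 1]`, where `x = Re z` and `|z| = 1`; it interpolates
between the Chebyshev polynomials of the second (`q = 0`) and first (`q → 1`) kind. -/
def bernsteinSzegoPoly (q : ℂ) (n : ℕ) : ℂ[X] := U ℂ n - C q * U ℂ ((n : ℤ) - 2)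

theorem degree_bernsteinSzegoPoly {q : ℂ} (hq : 1 + q ≠ 0) (n : ℕ) :
    (bernsteinSzegoPoly q n).degree = n := by
  match n with
  | 0 =>
    have : bernsteinSzegoPoly q 0 = C (1 + q) := by simp [bernsteinSzegoPoly]
    rw [this, degree_C hq, Nat.cast_zero]
  | 1 => simpa [bernsteinSzegoPoly] using degree_U_natCast ℂ 1
  | n + 2 =>
    have hlt : (C q * U ℂ n).degree < (U ℂ (n + 2 : ℕ)).degree := by
      refine (degree_mul_le_of_le degree_C_le le_rfl).trans_lt ?_
      rw [zero_add, degree_U_natCast, degree_U_natCast]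
      exact_mod_cast (by omega : n < n + 2)
    rw [bernsteinSzegoPoly, show ((n + 2 : ℕ) : ℤ) - 2 = n by push_cast; ring,
      degree_sub_eq_left_of_degree_lt hlt, degree_U_natCast]

theorem exists_eq_sum_smul_bernsteinSzegoPoly {q : ℂ} (hq : 1 + q ≠ 0) {p : ℂ[X]} {d : ℕ}
    (hp : p.natDegree ≤ d) :
    ∃ c : ℕ → ℂ, p = ∑ n ∈ Finset.range (d + 1), c n • bernsteinSzegoPoly q n := by
  let S : Polynomial.Sequence ℂ := ⟨bernsteinSzegoPoly q, degree_bernsteinSzegoPoly hq⟩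
  have hspan := S.span_degreeLT (m := d + 1) fun i _ ↦
    (leadingCoeff_ne_zero.mpr (S.ne_zero i)).isUnit
  have hmem : p ∈ degreeLT ℂ (d + 1) :=
    mem_degreeLT.mpr ((degree_le_of_natDegree_le hp).trans_lt
      (by exact_mod_cast Nat.lt_succ_self d))
  rw [← hspan, ← Finset.coe_range, Submodule.mem_span_image_finset_iff_exists_fun'] at hmem
  obtain ⟨c, hc⟩ := hmem
  exact ⟨c, hc.symm⟩

theorem bernsteinSzegoPoly_eval_re_mul_im {z : ℂ} (hz : ‖z‖ = 1) (q : ℝ) (n : ℕ) :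
    (bernsteinSzegoPoly q n).eval (z.re : ℂ) * z.im =
      (z ^ (n + 1) * conj (1 - q * z ^ 2)).im := by
  have hz₀ : z ≠ 0 := norm_ne_zero_iff.1 (by simp [hz])
  have hpow : z ^ (n + 1) * conj (1 - q * z ^ 2) =
      z ^ ((n : ℤ) + 1) - q * z ^ ((n : ℤ) - 2 + 1) := by
    have hconj : conj z = z⁻¹ := (Complex.inv_eq_conj hz).symm
    rw [show (n : ℤ) - 2 + 1 = (n : ℤ) + 1 - 2 by ring, zpow_sub₀ hz₀]
    simp only [map_sub, map_one, map_mul, map_pow, Complex.conj_ofReal, hconj]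
    norm_cast
    ring
  rw [hpow, Complex.sub_im, Complex.im_ofReal_mul, bernsteinSzegoPoly, eval_sub, eval_C_mul,
    sub_mul, mul_assoc, chebyshev_U_eval_re_mul_im hz, chebyshev_U_eval_re_mul_im hz]
  push_cast
  rfl

end BernsteinSzegoPoly

section BernsteinSzegoSine

/-- The function `bernsteinSzegoPoly q n (Re z) * Im z / |1 - q z ^ 2|` of the unit circle, written
as the imaginary part of a unimodular function; it equals `Im z ^ (n + 1)` for `q = 0`. -/
def bernsteinSzegoSine (q : ℝ) (n : ℕ) (z : ℂ) : ℝ :=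
  (z ^ (n + 1) * conj (1 - q * z ^ 2)).im / ‖1 - q * z ^ 2‖

theorem abs_bernsteinSzegoSine_le_one {z : ℂ} (hz : ‖z‖ = 1) (q : ℝ) (n : ℕ) :
    |bernsteinSzegoSine q n z| ≤ 1 := by
  rw [bernsteinSzegoSine, abs_div, abs_norm]
  refine div_le_one_of_le₀ ((Complex.abs_im_le_norm _).trans_eq ?_) (norm_nonneg _)
  rw [norm_mul, norm_pow, hz, one_pow, one_mul, RCLike.norm_conj]

theorem sum_bernsteinSzegoSine_smul {z : ℂ} (hz : ‖z‖ = 1) (q : ℝ) (s : Finset ℕ) (c : ℕ → ℂ) :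
    ∑ n ∈ s, bernsteinSzegoSine q n z • c n =
      (∑ n ∈ s, c n • bernsteinSzegoPoly q n).eval (z.re : ℂ) *
        (z.im / ‖1 - q * z ^ 2‖ : ℝ) := by
  rw [eval_finsetSum, Finset.sum_mul]
  refine Finset.sum_congr rfl fun n _ ↦ ?_
  rw [Complex.real_smul, bernsteinSzegoSine, Complex.ofReal_div, Complex.ofReal_div,
    ← bernsteinSzegoPoly_eval_re_mul_im hz, eval_smul, smul_eq_mul]
  ring

variable {q : ℝ}

theorem one_sub_mul_sq_ne_zero (hq : |q| < 1) {z : ℂ} (hz : ‖z‖ ≤ 1) : 1 - q * z ^ 2 ≠ 0 := by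
  refine sub_ne_zero.2 fun h ↦ ?_
  have hlt : ‖(q : ℂ) * z ^ 2‖ < 1 := by
    rw [norm_mul, norm_pow, Complex.norm_real]
    exact (mul_le_of_le_one_right (norm_nonneg q) (pow_le_one₀ (norm_nonneg z) hz)).trans_lt hq
  rw [← h, norm_one] at hlt
  exact hlt.false

theorem continuousOn_bernsteinSzegoSine (hq : |q| < 1) (n : ℕ) :
    ContinuousOn (bernsteinSzegoSine q n) (Metric.closedBall 0 1) := by
  unfold bernsteinSzegoSine
  refine ContinuousOn.div (by fun_prop) (by fun_prop) fun z hz ↦ ?_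
  exact norm_ne_zero_iff.2 (one_sub_mul_sq_ne_zero hq (mem_closedBall_zero_iff.1 hz))

theorem bernsteinSzegoSine_mul_bernsteinSzegoSine (hq : |q| < 1) {z : ℂ} (hz : ‖z‖ = 1)
    (m k : ℕ) :
    bernsteinSzegoSine q (m + k) z * bernsteinSzegoSine q m z =
      (z ^ k - z ^ (2 * m + k) * (z ^ 2 - q) / (1 - q * z ^ 2)).re / 2 := by
  have him (u v : ℂ) : u.im * v.im = (u * conj v - u * v).re / 2 := by
    simp only [Complex.sub_re, Complex.mul_re, Complex.conj_re, Complex.conj_im]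
    ring
  have hzz : z * conj z = 1 := by simp [Complex.mul_conj', hz]
  have hpow : z ^ (m + 1) * conj z ^ (m + 1) = 1 := by rw [← mul_pow, hzz, one_pow]
  have hconj : z ^ 2 - q = z ^ 2 * conj (1 - q * z ^ 2) := by
    simp only [map_sub, map_one, map_mul, map_pow, Complex.conj_ofReal]
    linear_combination q * (z * conj z + 1) * hzz
  have hh₀ := one_sub_mul_sq_ne_zero hq hz.le
  rw [bernsteinSzegoSine, bernsteinSzegoSine, hconj, div_mul_div_comm, him]
  generalize 1 - q * z ^ 2 = h at hh₀ ⊢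
  have hprod : z ^ (m + k + 1) * conj h * conj (z ^ (m + 1) * conj h) -
      z ^ (m + k + 1) * conj h * (z ^ (m + 1) * conj h) =
      (z ^ k - z ^ (2 * m + k) * (z ^ 2 * conj h) / h) * (‖h‖ ^ 2 : ℝ) := by
    have hnorm : (‖h‖ ^ 2 : ℝ) = h * conj h := by simp [Complex.mul_conj']
    rw [hnorm, map_mul, map_pow, Complex.conj_conj, sub_mul, ← mul_assoc (_ / h),
      div_mul_cancel₀ _ hh₀]
    linear_combination z ^ k * h * conj h * hpow
  have hnorm₀ : ‖h‖ ^ 2 ≠ 0 := by positivity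
  rw [hprod, Complex.re_mul_ofReal, ← sq ‖h‖, mul_div_right_comm, mul_div_cancel_right₀ _ hnorm₀]

theorem circleAverage_bernsteinSzegoSine_mul_add (hq : |q| < 1) (m k : ℕ) :
    Real.circleAverage (fun z ↦ bernsteinSzegoSine q (m + k) z * bernsteinSzegoSine q m z) 0 1 =
      ((0 : ℂ) ^ k + 0 ^ (2 * m + k) * q).re / 2 := by
  set F : ℂ → ℂ := fun z ↦ z ^ k - z ^ (2 * m + k) * (z ^ 2 - q) / (1 - q * z ^ 2) with hF
  have hdiff : DifferentiableOn ℂ F (Metric.closedBall 0 1) := fun z hz ↦ by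
    have := one_sub_mul_sq_ne_zero hq (mem_closedBall_zero_iff.1 hz)
    exact DifferentiableAt.differentiableWithinAt (by fun_prop (disch := assumption))
  have hint : CircleIntegrable F 0 1 :=
    (hdiff.continuousOn.mono Metric.sphere_subset_closedBall).circleIntegrable zero_le_one
  have hmean : Real.circleAverage F 0 1 = F 0 :=
    (hdiff.diffContOnCl_ball (by rw [abs_one])).circleAverage
  calc Real.circleAverage (fun z ↦ bernsteinSzegoSine q (m + k) z * bernsteinSzegoSine q m z) 0 1
    _ = Real.circleAverage (fun z ↦ (2⁻¹ : ℝ) • (Complex.reCLM ∘ F) z) 0 1 :=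
        Real.circleAverage_congr_sphere fun z hz ↦ by
          have hz₁ : ‖z‖ = 1 := by simpa using hz
          simp [bernsteinSzegoSine_mul_bernsteinSzegoSine hq hz₁, hF, div_eq_inv_mul]
    _ = (F 0).re / 2 := by
        rw [Real.circleAverage_fun_smul, Complex.reCLM.circleAverage_comp_comm hint, hmean,
          smul_eq_mul, Complex.reCLM_apply, div_eq_inv_mul]
    _ = ((0 : ℂ) ^ k + 0 ^ (2 * m + k) * q).re / 2 := by simp [hF]

theorem circleAverage_bernsteinSzegoSine_mul_of_ne (hq : |q| < 1) {m n : ℕ} (hmn : m ≠ n) :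
    Real.circleAverage (fun z ↦ bernsteinSzegoSine q m z * bernsteinSzegoSine q n z) 0 1 = 0 := by
  wlog hlt : n < m generalizing m n
  · simpa only [mul_comm] using this hmn.symm (by omega)
  obtain ⟨k, rfl⟩ := Nat.exists_eq_add_of_lt hlt
  simp [add_assoc, circleAverage_bernsteinSzegoSine_mul_add hq]

theorem circleAverage_bernsteinSzegoSine_sq (hq : |q| < 1) (n : ℕ) :
    Real.circleAverage (fun z ↦ bernsteinSzegoSine q n z ^ 2) 0 1 =
      (if n = 0 then 1 + q else 1) / 2 := by
  have h := circleAverage_bernsteinSzegoSine_mul_add hq n 0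
  simp only [add_zero, ← sq] at h
  rw [h]
  split_ifs with hn <;> simp [hn]

end BernsteinSzegoSine

section PointEvaluation

variable {p : ℂ[X]} {d : ℕ}

theorem norm_sq_eval_re_mul_sq_le_circleAverage (hp : p.natDegree ≤ d) {q : ℝ} (hq₀ : 0 ≤ q)
    (hq₁ : q < 1) {z : ℂ} (hz : ‖z‖ = 1) :
    ‖p.eval (z.re : ℂ)‖ ^ 2 * (z.im / ‖1 - q * z ^ 2‖) ^ 2 ≤ 2 * (d + 1) *
      Real.circleAverage (fun w ↦ ‖p.eval (w.re : ℂ)‖ ^ 2 * (w.im / ‖1 - q * w ^ 2‖) ^ 2) 0 1 := by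
  have hq : |q| < 1 := abs_lt.2 ⟨by linarith, hq₁⟩
  obtain ⟨c, hc⟩ := exists_eq_sum_smul_bernsteinSzegoPoly (q := q)
    (by exact_mod_cast (by positivity : 1 + q ≠ 0)) hp
  have hint (m n : ℕ) :
      CircleIntegrable (fun w ↦ bernsteinSzegoSine q m w * bernsteinSzegoSine q n w) 0 1 :=
    (((continuousOn_bernsteinSzegoSine hq m).mul (continuousOn_bernsteinSzegoSine hq n)).mono
      Metric.sphere_subset_closedBall).circleIntegrable zero_le_one
  have hhalf (n : ℕ) : 1 / 2 ≤ Real.circleAverage (fun w ↦ bernsteinSzegoSine q n w ^ 2) 0 1 := by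
    rw [circleAverage_bernsteinSzegoSine_sq hq]
    split_ifs <;> linarith
  have hexpand {w : ℂ} (hw : ‖w‖ = 1) :
      ‖p.eval (w.re : ℂ)‖ ^ 2 * (w.im / ‖1 - q * w ^ 2‖) ^ 2 =
        ‖∑ n ∈ Finset.range (d + 1), bernsteinSzegoSine q n w • c n‖ ^ 2 := by
    rw [sum_bernsteinSzegoSine_smul hw, ← hc, norm_mul, Complex.norm_real, mul_pow,
      Real.norm_eq_abs, sq_abs]
  rw [hexpand hz, Real.circleAverage_congr_sphere fun w hw ↦ hexpand (by simpa using hw),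
    circleAverage_norm_sq_sum_smul (fun m _ n _ ↦ hint m n)
      fun m _ n _ ↦ circleAverage_bernsteinSzegoSine_mul_of_ne hq]
  calc ‖∑ n ∈ Finset.range (d + 1), bernsteinSzegoSine q n z • c n‖ ^ 2
      ≤ (Finset.range (d + 1)).card * ∑ n ∈ Finset.range (d + 1), ‖c n‖ ^ 2 :=
        norm_sq_sum_smul_le_card_mul (fun n _ ↦ abs_bernsteinSzegoSine_le_one hz q n) c
    _ = 2 * (d + 1) * ∑ n ∈ Finset.range (d + 1), ‖c n‖ ^ 2 * (1 / 2) := by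
        rw [Finset.card_range, ← Finset.sum_mul]
        push_cast
        ring
    _ ≤ 2 * (d + 1) * ∑ n ∈ Finset.range (d + 1),
          ‖c n‖ ^ 2 * Real.circleAverage (fun w ↦ bernsteinSzegoSine q n w ^ 2) 0 1 := by
        gcongr with n
        exact hhalf n

theorem circleAverage_abs_im_smul_comp_re {E : Type*} [NormedAddCommGroup E] [NormedSpace ℝ E]
    {f : ℝ → E} (hf : Continuous f) :
    Real.circleAverage (fun z ↦ |z.im| • f z.re) 0 1 = π⁻¹ • ∫ x in (-1 : ℝ)..1, f x := by
  have hsubst (a b : ℝ) :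
      ∫ φ in a..b, (-Real.sin φ) • f (Real.cos φ) = ∫ x in Real.cos a..Real.cos b, f x :=
    intervalIntegral.integral_deriv_smul_comp (fun φ _ ↦ Real.hasDerivAt_cos φ) (by fun_prop) hf
  have hcont : Continuous fun φ : ℝ ↦ |Real.sin φ| • f (Real.cos φ) := by fun_prop
  have hupper : ∫ φ in 0..π, |Real.sin φ| • f (Real.cos φ) = ∫ x in (-1 : ℝ)..1, f x := by
    have hsubst_upper := hsubst 0 π
    rw [Real.cos_zero, Real.cos_pi] at hsubst_upper
    rw [intervalIntegral.integral_symm 1 (-1), ← hsubst_upper, ← intervalIntegral.integral_neg]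
    refine intervalIntegral.integral_congr fun φ hφ ↦ ?_
    rw [Set.uIcc_of_le Real.pi_pos.le] at hφ
    simp only [abs_of_nonneg (Real.sin_nonneg_of_mem_Icc hφ), neg_smul, neg_neg]
  have hlower : ∫ φ in π..2 * π, |Real.sin φ| • f (Real.cos φ) = ∫ x in (-1 : ℝ)..1, f x := by
    rw [← Real.cos_pi, ← Real.cos_two_pi, ← hsubst]
    refine intervalIntegral.integral_congr fun φ hφ ↦ ?_
    rw [Set.uIcc_of_le (by linarith [Real.pi_pos])] at hφ
    have hsin : 0 ≤ Real.sin (φ - π) :=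
      Real.sin_nonneg_of_nonneg_of_le_pi (by linarith [hφ.1]) (by linarith [hφ.2])
    rw [Real.sin_sub_pi] at hsin
    simp only [abs_of_nonpos (neg_nonneg.1 hsin)]
  have hcircle (φ : ℝ) : circleMap 0 1 φ = Complex.exp (φ * Complex.I) := by simp [circleMap]
  simp only [Real.circleAverage_def, hcircle, Complex.exp_ofReal_mul_I_re,
    Complex.exp_ofReal_mul_I_im]
  rw [← intervalIntegral.integral_add_adjacent_intervals (hcont.intervalIntegrable 0 π)
    (hcont.intervalIntegrable π (2 * π)), hupper, hlower, ← two_smul ℝ, smul_smul]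
  congr 1
  field_simp

theorem circleAverage_comp_re_mul_le {f : ℝ → ℝ} (hf : Continuous f) (hf₀ : ∀ x, 0 ≤ f x)
    {w : ℂ → ℝ} (hfw : CircleIntegrable (fun z ↦ f z.re * w z) 0 1) {K : ℝ}
    (hw : ∀ z, ‖z‖ = 1 → w z ≤ K * |z.im|) :
    Real.circleAverage (fun z ↦ f z.re * w z) 0 1 ≤ K * (π⁻¹ * ∫ x in (-1 : ℝ)..1, f x) := by
  rw [← smul_eq_mul, ← smul_eq_mul (a := π⁻¹), ← circleAverage_abs_im_smul_comp_re hf,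
    ← Real.circleAverage_fun_smul]
  refine Real.circleAverage_mono hfw (ContinuousOn.circleIntegrable zero_le_one (by fun_prop))
    fun z hz ↦ ?_
  calc f z.re * w z ≤ f z.re * (K * |z.im|) :=
        mul_le_mul_of_nonneg_left (hw z (by simpa using hz)) (hf₀ z.re)
    _ = K • |z.im| • f z.re := by rw [smul_eq_mul, smul_eq_mul]; ring

theorem norm_sq_one_sub_mul_sq {z : ℂ} (hz : ‖z‖ = 1) (q : ℝ) :
    ‖1 - q * z ^ 2‖ ^ 2 = (1 - q) ^ 2 + 4 * q * z.im ^ 2 := by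
  have hsq : z.re ^ 2 + z.im ^ 2 = 1 := by
    rw [← Complex.normSq_add_mul_I, Complex.re_add_im, Complex.normSq_eq_norm_sq, hz, one_pow]
  rw [← Complex.normSq_eq_norm_sq, Complex.normSq_apply]
  simp only [sq z, Complex.sub_re, Complex.sub_im, Complex.one_re, Complex.one_im,
    Complex.mul_re, Complex.mul_im, Complex.ofReal_re, Complex.ofReal_im]
  linear_combination (q ^ 2 * (z.re ^ 2 + z.im ^ 2 + 1) - 2 * q) * hsq

theorem sq_im_div_norm_one_sub_mul_sq {z : ℂ} (hz : ‖z‖ = 1) {q s : ℝ}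
    (hqs : (1 - q) ^ 2 = 4 * q * s ^ 2) :
    (z.im / ‖1 - q * z ^ 2‖) ^ 2 = z.im ^ 2 / (4 * q * (s ^ 2 + z.im ^ 2)) := by
  rw [div_pow, norm_sq_one_sub_mul_sq hz, hqs, mul_add]

theorem sq_im_div_norm_one_sub_mul_sq_le {z : ℂ} (hz : ‖z‖ = 1) {q s : ℝ} (hq : 0 < q)
    (hs : 0 < s) (hqs : (1 - q) ^ 2 = 4 * q * s ^ 2) :
    (z.im / ‖1 - q * z ^ 2‖) ^ 2 ≤ (8 * q * s)⁻¹ * |z.im| := by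
  rw [sq_im_div_norm_one_sub_mul_sq hz hqs, ← sq_abs z.im, inv_mul_eq_div,
    div_le_div_iff₀ (by positivity) (by positivity)]
  -- AM-GM, an equality when `|z.im| = s`: this is what dictates the relation between `q` and `s`.
  calc |z.im| ^ 2 * (8 * q * s) = 4 * q * |z.im| * (2 * s * |z.im|) := by ring
    _ ≤ 4 * q * |z.im| * (s ^ 2 + |z.im| ^ 2) := by gcongr; exact two_mul_le_add_sq s |z.im|
    _ = |z.im| * (4 * q * (s ^ 2 + |z.im| ^ 2)) := by ring

theorem exists_one_sub_sq_eq_four_mul_mul_sq {s : ℝ} (hs : 0 < s) :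
    ∃ q, 0 < q ∧ q < 1 ∧ (1 - q) ^ 2 = 4 * q * s ^ 2 := by
  obtain ⟨y, rfl⟩ := Real.sinh_surjective s
  have hy : 0 < y := Real.sinh_pos_iff.1 hs
  have hexp : Real.exp y * Real.exp (-y) = 1 := by
    rw [← Real.exp_add, add_neg_cancel, Real.exp_zero]
  refine ⟨Real.exp (-y) ^ 2, by positivity,
    pow_lt_one₀ (Real.exp_pos _).le (Real.exp_lt_one_iff.2 (by linarith)) two_ne_zero, ?_⟩
  rw [Real.sinh_eq]
  linear_combination (-Real.exp y * Real.exp (-y) + 2 * Real.exp (-y) ^ 2 - 1) * hexp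

theorem norm_sq_eval_le_integral_neg_one_one (hp : p.natDegree ≤ d) {x : ℝ}
    (hx : x ∈ Set.Ioo (-1 : ℝ) 1) :
    ‖p.eval (x : ℂ)‖ ^ 2 ≤
      2 * (d + 1) / (π * √(1 - x ^ 2)) * ∫ u in (-1 : ℝ)..1, ‖p.eval (u : ℂ)‖ ^ 2 := by
  set s := √(1 - x ^ 2)
  have hs : 0 < s := Real.sqrt_pos.2 (by nlinarith [hx.1, hx.2])
  have hs_sq : s ^ 2 = 1 - x ^ 2 := Real.sq_sqrt (by nlinarith [hx.1, hx.2])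
  obtain ⟨q, hq₀, hq₁, hqs⟩ := exists_one_sub_sq_eq_four_mul_mul_sq hs
  have hq : |q| < 1 := abs_lt.2 ⟨by linarith, hq₁⟩
  have hcont : ContinuousOn (fun z : ℂ ↦ ‖p.eval (z.re : ℂ)‖ ^ 2 * (z.im / ‖1 - q * z ^ 2‖) ^ 2)
      (Metric.sphere 0 1) := by
    refine ContinuousOn.mul (by fun_prop) (.pow (.div (by fun_prop) (by fun_prop) ?_) 2)
    exact fun z hz ↦ norm_ne_zero_iff.2
      (one_sub_mul_sq_ne_zero hq (mem_sphere_zero_iff_norm.1 hz).le)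
  have hcircle := circleAverage_comp_re_mul_le (f := fun u : ℝ ↦ ‖p.eval (u : ℂ)‖ ^ 2)
    (by fun_prop) (fun u ↦ sq_nonneg _) (hcont.circleIntegrable zero_le_one)
    fun z hz ↦ sq_im_div_norm_one_sub_mul_sq_le hz hq₀ hs hqs
  have hnorm : ‖(⟨x, s⟩ : ℂ)‖ = 1 := by
    rw [← sq_eq_sq₀ (norm_nonneg _) zero_le_one, ← Complex.normSq_eq_norm_sq, Complex.normSq_mk]
    linarith
  have hpoint := norm_sq_eval_re_mul_sq_le_circleAverage hp hq₀.le hq₁ hnorm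
  rw [sq_im_div_norm_one_sub_mul_sq hnorm hqs] at hpoint
  have hvalue : s ^ 2 / (4 * q * (s ^ 2 + s ^ 2)) = (8 * q)⁻¹ := by field_simp; norm_num
  simp only [hvalue] at hpoint
  have hfinal := hpoint.trans (mul_le_mul_of_nonneg_left hcircle (by positivity))
  rw [← div_eq_mul_inv, div_le_iff₀ (by positivity)] at hfinal
  refine hfinal.trans_eq ?_
  field_simp

theorem norm_sq_eval_le_integral (hp : p.natDegree ≤ d) {a b t : ℝ} (ht : t ∈ Set.Ioo a b) :
    ‖p.eval (t : ℂ)‖ ^ 2 ≤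
      2 * (d + 1) / (π * √((t - a) * (b - t))) * ∫ u in a..b, ‖p.eval (u : ℂ)‖ ^ 2 := by
  obtain ⟨hat, htb⟩ := ht
  have hab : 0 < b - a := by linarith
  set m := (b - a) / 2 with hm
  have hm₀ : 0 < m := half_pos hab
  set h := (a + b) / 2 with hh
  set x := (t - h) / m with hx
  have hxt : m * x + h = t := by rw [hx]; field_simp; ring
  have hx_mem : x ∈ Set.Ioo (-1) 1 :=
    ⟨by rw [hx, lt_div_iff₀ hm₀]; linarith, by rw [hx, div_lt_iff₀ hm₀]; linarith⟩
  have hsqrt : √(1 - x ^ 2) = √((t - a) * (b - t)) / m := by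
    rw [← Real.sqrt_sq hm₀.le, ← Real.sqrt_div' _ (sq_nonneg m)]
    congr 1
    rw [← hxt]
    field_simp
    rw [hm, hh]
    ring
  set P := p.comp (C (m : ℂ) * X + C (h : ℂ)) with hP
  have heval (u : ℝ) : P.eval (u : ℂ) = p.eval ((m * u + h : ℝ) : ℂ) := by simp [hP]
  have hPdeg : P.natDegree ≤ d :=
    calc P.natDegree ≤ p.natDegree * (C (m : ℂ) * X + C (h : ℂ)).natDegree := natDegree_comp_le
      _ ≤ d * 1 := Nat.mul_le_mul hp natDegree_linear_le
      _ = d := mul_one d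
  have hbound := norm_sq_eval_le_integral_neg_one_one hPdeg hx_mem
  simp only [heval] at hbound
  rw [hxt, hsqrt, intervalIntegral.integral_comp_mul_add (fun u : ℝ ↦ ‖p.eval (u : ℂ)‖ ^ 2) hm₀.ne',
    show m * -1 + h = a by ring, show m * 1 + h = b by ring, smul_eq_mul] at hbound
  refine hbound.trans_eq ?_
  field_simp

theorem two_mul_sqrt_min_div_mul_le {T t : ℝ} (ht : t ∈ Set.Ioo 0 T) :
    2 * (√(min t (T - t) / T) * T) ≤ π * √(t * (T - t)) := by
  have ht₀ : 0 < t := ht.1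
  have htT : 0 < T - t := sub_pos.2 ht.2
  have hT : 0 < T := by linarith
  have : 0 < min t (T - t) := lt_min ht₀ htT
  have hmin_mul : min t (T - t) * T ≤ 2 * (t * (T - t)) := by
    have hmax : T ≤ 2 * max t (T - t) := by linarith [le_max_left t (T - t), le_max_right t (T - t)]
    calc min t (T - t) * T ≤ min t (T - t) * (2 * max t (T - t)) := by gcongr
      _ = 2 * (t * (T - t)) := by rw [mul_left_comm, min_mul_max]
  refine le_of_sq_le_sq ?_ (by positivity)
  calc (2 * (√(min t (T - t) / T) * T)) ^ 2 = 4 * (min t (T - t) * T) := by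
        rw [mul_pow, mul_pow, Real.sq_sqrt (by positivity)]
        field_simp
        norm_num
    _ ≤ 3 ^ 2 * (t * (T - t)) := by nlinarith [mul_pos ht₀ htT]
    _ ≤ π ^ 2 * (t * (T - t)) := by gcongr; exact Real.pi_gt_three.le
    _ = (π * √(t * (T - t))) ^ 2 := by rw [mul_pow, Real.sq_sqrt (by positivity)]

end PointEvaluation

/-- Claim E.2, a Bernstein-type smoothness bound for low-degree
polynomials: for a complex polynomial `p` of degree at most `d`, `T > 0` and
`t ∈ (0,T)`, with `r = min(t, T−t)/T`, one has
`|p(t)|² ≤ ((d+1)/√r) ⋅ (1/T)∫₀ᵀ |p(u)|² du`. -/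
theorem statement14
    (p : Polynomial ℂ) (d : ℕ) (hd : p.natDegree ≤ d)
    (T t : ℝ) (hT : 0 < T) (ht : t ∈ Set.Ioo (0 : ℝ) T) :
    ‖p.eval (t : ℂ)‖ ^ 2 ≤
      ((d + 1 : ℝ) / Real.sqrt (min t (T - t) / T)) *
        ((1 / T) * ∫ u in Set.Icc (0 : ℝ) T, ‖p.eval (u : ℂ)‖ ^ 2) := by
  have ht₀ : 0 < t := ht.1
  have htT : 0 < T - t := sub_pos.2 ht.2
  have : 0 < min t (T - t) / T := div_pos (lt_min ht₀ htT) hT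
  have hbound := norm_sq_eval_le_integral hd ht
  rw [sub_zero, intervalIntegral.integral_of_le hT.le,
    ← MeasureTheory.integral_Icc_eq_integral_Ioc] at hbound
  have hconst : 2 / (π * √(t * (T - t))) ≤ 1 / (√(min t (T - t) / T) * T) := by
    rw [div_le_div_iff₀ (by positivity) (by positivity), one_mul]
    exact two_mul_sqrt_min_div_mul_le ht
  set I := ∫ u in Set.Icc (0 : ℝ) T, ‖p.eval (u : ℂ)‖ ^ 2
  have : 0 ≤ I := MeasureTheory.integral_nonneg fun u ↦ sq_nonneg _
  calc ‖p.eval (t : ℂ)‖ ^ 2 ≤ 2 * (d + 1) / (π * √(t * (T - t))) * I := hbound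
    _ = (d + 1) * (2 / (π * √(t * (T - t)))) * I := by ring
    _ ≤ (d + 1) * (1 / (√(min t (T - t) / T) * T)) * I := by gcongr
    _ = (d + 1) / √(min t (T - t) / T) * (1 / T * I) := by field_simp

end
end
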